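/- Let O ≥ 1 and B ≥ 1 be natural numbers, let t : ℕ → ℝ assign a nonnegative per-block execution time t(o) to each pipeline stage o < O, and let f : ℕ → ℕ → ℝ satisfy the pipeline recurrence f(o, b) = t(o) + max(a, c), where a = f(o−1, b) if o > 0 and a = 0 if o = 0, and c = f(o, b−1) if b > 0 and c = 0 if b = 0. Then the completion time of the last operation of the last block satisfies f(O−1, B−1) = (∑_{o=0}^{O−1} t(o)) + (B−1) · max_{o<O} t(o). -/

import Mathlib

/-!
The closed form holds at every stage and block, not only at the last ones:
`f o b = ∑_{i ≤ o} t i + b * M o`, where `M o = max_{i ≤ o} t i` is the running maximum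
`partialSups t o`. Substituted into the recurrence, this reduces to
`max (b * M (o - 1)) (t o + (b - 1) * M o) = b * M o`. Both entries are at most the right-hand side,
and one of them attains it: the first if `M o = M (o - 1)`, the second if `M o = t o`.
-/

/-- One step of the recurrence, with `m` the previous running maximum, `x` the new stage time and
`b + 1` the block index. -/
lemma max_bottleneck_step (m x b : ℝ) (hb : 0 ≤ b) :
    max ((b + 1) * m) (x + b * max m x) = (b + 1) * max m x := by
  rcases le_total m x with h | h
  · rw [max_eq_right h, max_eq_right] <;> nlinarith
  · rw [max_eq_left h, max_eq_left] <;> nlinarith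

/-- The closed form for all completion times of the pipeline. -/
lemma pipeline_completion_time (O B : ℕ) (t : ℕ → ℝ) (ht : ∀ o < O, 0 ≤ t o)
    (f : ℕ → ℕ → ℝ)
    (hf : ∀ o < O, ∀ b < B,
      f o b = t o + max (if o = 0 then 0 else f (o - 1) b)
                        (if b = 0 then 0 else f o (b - 1))) :
    ∀ o < O, ∀ b < B,
      f o b = ∑ i ∈ Finset.range (o + 1), t i + b * partialSups t o := by
  intro o
  induction o with
  | zero =>
    intro ho b
    have h0 := ht 0 ho
    induction b with
    | zero => intro hb; rw [hf 0 ho 0 hb]; simp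
    | succ b ihb =>
      intro hb
      have hbt : 0 ≤ (b : ℝ) * t 0 := by positivity
      rw [hf 0 ho _ hb]
      simp only [if_true, Nat.add_one_ne_zero, if_false, Nat.add_sub_cancel]
      rw [ihb (by omega)]
      simp only [zero_add, Finset.sum_range_one, partialSups_zero]
      rw [max_eq_right (by positivity)]
      push_cast
      ring
  | succ o iho =>
    intro ho b
    induction b with
    | zero =>
      intro hb
      have hS : 0 ≤ ∑ i ∈ Finset.range (o + 1), t i :=
        Finset.sum_nonneg fun i hi => ht i (by have := Finset.mem_range.mp hi; omega)
      rw [hf _ ho 0 hb]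
      simp only [if_true, Nat.add_one_ne_zero, if_false, Nat.add_sub_cancel]
      rw [iho (by omega) 0 hb, Finset.sum_range_succ _ (o + 1)]
      simp only [Nat.cast_zero, zero_mul, add_zero]
      rw [max_eq_left hS]
      ring
    | succ b ihb =>
      intro hb
      rw [hf _ ho _ hb]
      simp only [Nat.add_one_ne_zero, if_false, Nat.add_sub_cancel]
      rw [iho (by omega) _ hb, ihb (by omega), Finset.sum_range_succ _ (o + 1),
        partialSups_add_one, add_assoc (∑ i ∈ Finset.range (o + 1), t i), max_add_add_left]
      push_cast
      rw [max_bottleneck_step _ _ _ (Nat.cast_nonneg b)]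
      ring

/-- Makespan of the block-based pipeline: with `O` stages of per-block execution
times `t o ≥ 0` and `B` blocks, where the completion times `f o b` satisfy the
pipeline recurrence `f o b = t o + max a c` (with `a = f (o−1) b` if `o > 0`, else
`0`, and `c = f o (b−1)` if `b > 0`, else `0`), the completion time of the last
operation of the last block equals
`(∑_{o<O} t o) + (B − 1) · max_{o<O} t o`. -/
theorem pipeline_makespan (O B : ℕ) (hO : 1 ≤ O) (hB : 1 ≤ B)
    (t : ℕ → ℝ) (ht : ∀ o < O, 0 ≤ t o)
    (f : ℕ → ℕ → ℝ)
    (hf : ∀ o < O, ∀ b < B,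
      f o b = t o + max (if o = 0 then 0 else f (o - 1) b)
                        (if b = 0 then 0 else f o (b - 1))) :
    f (O - 1) (B - 1)
      = (∑ o ∈ Finset.range O, t o)
        + (B - 1 : ℕ) * (Finset.range O).sup' (Finset.nonempty_range_iff.mpr (by omega)) t := by
  obtain ⟨n, rfl⟩ : ∃ n, O = n + 1 := ⟨O - 1, by omega⟩
  rw [pipeline_completion_time (n + 1) B t ht f hf _ (by omega) _ (by omega),
    partialSups_eq_sup'_range]
  rfl
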